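/- Proposition (stochastic-transition counterexample to identifiability of partial return): Consider the MDP with start state s_0 and absorbing states s_safe, s_win, s_lose (all further reward 0); from s_0, action a_safe deterministically reaches s_safe with reward 0, and action a_risk reaches s_win with probability 0.5 and reward r_win, and s_lose with probability 0.5 and reward −10. Let r be the reward with r_win = 11 and r̂ the reward with r_win = 9. Then: (i) a_risk is the unique optimal action at s_0 under r while a_safe is the unique optimal action at s_0 under r̂, so Π*_r ≠ Π*_{r̂}; and (ii) the noiseless partial-return preference relation over the three length-1 segments is identical under r and r̂, namely (s_0, a_risk, s_win) ≻ (s_0, a_safe, s_safe) ≻ (s_0, a_risk, s_lose). -/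

import Mathlib

open scoped BigOperators

/-- The dynamics of a finite MDP: a transition kernel `T` on finite state and action spaces. -/
structure MDP (S A : Type) [Fintype S] [Fintype A] where
  T : S → A → S → ℝ
  T_nonneg : ∀ s a s', 0 ≤ T s a s'
  T_sum_one : ∀ s a, ∑ s', T s a s' = 1

/-- A (stochastic, memoryless) policy `π : S → Δ(A)`. -/
structure Policy (S A : Type) [Fintype A] where
  p : S → A → ℝ
  nonneg : ∀ s a, 0 ≤ p s a
  sum_one : ∀ s, ∑ a, p s a = 1

variable {S A : Type} [Fintype S] [Fintype A]

/-- Expected reward received at time `t` when starting from state `s` and following `π`. -/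
noncomputable def expReward (M : MDP S A) (π : Policy S A) (r : S → A → S → ℝ) :
    ℕ → S → ℝ
  | 0, s => ∑ a, ∑ s', π.p s a * M.T s a s' * r s a s'
  | t + 1, s => ∑ a, ∑ s', π.p s a * M.T s a s' * expReward M π r t s'

/-- `V^π_{r,γ}`: the expected discounted return of policy `π` from state `s`. -/
noncomputable def Vpi (M : MDP S A) (π : Policy S A) (r : S → A → S → ℝ) (γ : ℝ) (s : S) : ℝ :=
  ∑' t : ℕ, γ ^ t * expReward M π r t s

/-- `Q^π_{r,γ}`: the expected discounted return from `s` taking `a` first, following `π` after. -/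
noncomputable def Qpi (M : MDP S A) (π : Policy S A) (r : S → A → S → ℝ) (γ : ℝ)
    (s : S) (a : A) : ℝ :=
  ∑ s', M.T s a s' * (r s a s' + γ * Vpi M π r γ s')

/-- The optimal state-value function `V*_{r,γ}`. -/
noncomputable def Vstar (M : MDP S A) (r : S → A → S → ℝ) (γ : ℝ) (s : S) : ℝ :=
  ⨆ π : Policy S A, Vpi M π r γ s

/-- The optimal state-action value function `Q*_{r,γ}`. -/
noncomputable def Qstar (M : MDP S A) (r : S → A → S → ℝ) (γ : ℝ) (s : S) (a : A) : ℝ :=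
  ⨆ π : Policy S A, Qpi M π r γ s a

/-- `Π*_{(r,γ)}`: the set of optimal policies, those attaining `V*` at every state. -/
def Pistar (M : MDP S A) (r : S → A → S → ℝ) (γ : ℝ) : Set (Policy S A) :=
  {π | ∀ s, Vpi M π r γ s = Vstar M r γ s}

/-- A segment of length `n`: states `s_0, …, s_n` and actions `a_0, …, a_{n-1}`. -/
abbrev Segment (S A : Type) (n : ℕ) := (Fin (n + 1) → S) × (Fin n → A)

/-- Discounted partial return of a segment: `Σ_{t<n} γ^t r(s_t, a_t, s_{t+1})`. -/
noncomputable def partialReturn {S A : Type} (r : S → A → S → ℝ) (γ : ℝ) {n : ℕ}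
    (σ : Segment S A n) : ℝ :=
  ∑ t : Fin n, γ ^ (t : ℕ) * r (σ.1 t.castSucc) (σ.2 t) (σ.1 t.succ)

/-- Regret of a segment: `Σ_{t<n} γ^t (V*(s_t) − Q*(s_t,a_t))`. -/
noncomputable def segRegret (M : MDP S A) (r : S → A → S → ℝ) (γ : ℝ) {n : ℕ}
    (σ : Segment S A n) : ℝ :=
  ∑ t : Fin n, γ ^ (t : ℕ) *
    (Vstar M r γ (σ.1 t.castSucc) - Qstar M r γ (σ.1 t.castSucc) (σ.2 t))

/-- The logistic function. -/
noncomputable def logistic (x : ℝ) : ℝ := 1 / (1 + Real.exp (-x))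

namespace RiskMDP

/-- States: `0 = s₀`, `1 = s_safe`, `2 = s_win`, `3 = s_lose`. -/
abbrev St := Fin 4
/-- Actions: `0 = a_safe`, `1 = a_risk`. -/
abbrev Ac := Fin 2

/-- From `s₀`, `a_safe` deterministically reaches `s_safe`; `a_risk` reaches `s_win` with
probability `1/2` and `s_lose` with probability `1/2`.  `s_safe`, `s_win`, `s_lose` are
absorbing. -/
noncomputable def T (s : St) (a : Ac) (s' : St) : ℝ :=
  if s = 0 then
    if a = 0 then (if s' = 1 then 1 else 0)
    else (if s' = 2 then 1 / 2 else if s' = 3 then 1 / 2 else 0)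
  else (if s' = s then 1 else 0)

noncomputable def M : MDP St Ac where
  T := T
  T_nonneg := by
    intro s a s'
    unfold T
    split_ifs <;> norm_num
  T_sum_one := by
    intro s a
    fin_cases s <;> fin_cases a <;>
      simp +decide [T, Fin.sum_univ_four] <;> norm_num

/-- Reward: from `s₀`, `a_risk` yields `r_win` at `s_win` and `−10` at `s_lose`; everything
else (including `a_safe` and all transitions from absorbing states) yields `0`. -/
noncomputable def rew (rwin : ℝ) : St → Ac → St → ℝ := fun s a s' =>
  if s = 0 ∧ a = 1 then (if s' = 2 then rwin else if s' = 3 then -10 else 0) else 0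

lemma expReward_abs (π : Policy St Ac) (w : ℝ) (t : ℕ) (s : St) (hs : s ≠ 0) :
    expReward M π (rew w) t s = 0 := by
  induction t with
  | zero => simp [expReward, rew, hs]
  | succ t ih =>
    have hM : M.T = T := rfl
    simp [expReward, hM, T, hs, ih]

lemma expReward_zero (π : Policy St Ac) (w : ℝ) :
    expReward M π (rew w) 0 0 = π.p 0 1 * ((w - 10) / 2) := by
  simp +decide [expReward, M, T, rew, Fin.sum_univ_four]
  ring

lemma expReward_succ (π : Policy St Ac) (w : ℝ) (t : ℕ) :
    expReward M π (rew w) (t + 1) 0 = 0 := by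
  have h1 := expReward_abs π w t 1 (by decide)
  have h2 := expReward_abs π w t 2 (by decide)
  have h3 := expReward_abs π w t 3 (by decide)
  simp +decide [expReward, M, T, Fin.sum_univ_four] at h1 h2 h3 ⊢
  simp [h1, h2, h3]

lemma Vpi_abs (π : Policy St Ac) (w : ℝ) (s : St) (hs : s ≠ 0) :
    Vpi M π (rew w) 1 s = 0 := by
  simp [Vpi, expReward_abs π w _ s hs]

lemma Vpi_zero (π : Policy St Ac) (w : ℝ) :
    Vpi M π (rew w) 1 0 = π.p 0 1 * ((w - 10) / 2) := by
  unfold Vpi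
  rw [tsum_eq_single 0]
  · simp [expReward_zero]
  · intro t ht
    obtain ⟨k, rfl⟩ := Nat.exists_eq_succ_of_ne_zero ht
    simp [expReward_succ]

lemma Qpi_safe (π : Policy St Ac) (w : ℝ) : Qpi M π (rew w) 1 0 0 = 0 := by
  have h1 := Vpi_abs π w 1 (by decide)
  unfold Qpi
  rw [Fin.sum_univ_four, h1]
  simp +decide [M, T, rew]

lemma Qpi_risk (π : Policy St Ac) (w : ℝ) : Qpi M π (rew w) 1 0 1 = (w - 10) / 2 := by
  have h2 := Vpi_abs π w 2 (by decide)
  have h3 := Vpi_abs π w 3 (by decide)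
  unfold Qpi
  rw [Fin.sum_univ_four, h2, h3]
  simp +decide [M, T, rew]
  ring

/-- The policy that always plays the action `b`. -/
noncomputable def pureP (b : Ac) : Policy St Ac where
  p := fun _ a => if a = b then 1 else 0
  nonneg := by intro s a; split_ifs <;> norm_num
  sum_one := by intro s; simp

instance : Nonempty (Policy St Ac) := ⟨pureP 0⟩

lemma Qstar_safe (w : ℝ) : Qstar M (rew w) 1 0 0 = 0 := by
  simp [Qstar, Qpi_safe]

lemma Qstar_risk (w : ℝ) : Qstar M (rew w) 1 0 1 = (w - 10) / 2 := by
  simp [Qstar, Qpi_risk]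

lemma p_le_one (π : Policy St Ac) : π.p 0 1 ≤ 1 := by
  have h := π.sum_one 0
  rw [Fin.sum_univ_two] at h
  linarith [π.nonneg 0 0]

lemma Vstar_11 : Vstar M (rew 11) 1 0 = 1 / 2 := by
  refine IsGreatest.csSup_eq ⟨⟨pureP 1, ?_⟩, ?_⟩
  · dsimp only
    rw [Vpi_zero]
    norm_num [pureP]
  · rintro _ ⟨π, rfl⟩
    dsimp only
    rw [Vpi_zero]
    linarith [p_le_one π]

lemma Vstar_9 : Vstar M (rew 9) 1 0 = 0 := by
  refine IsGreatest.csSup_eq ⟨⟨pureP 0, ?_⟩, ?_⟩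
  · dsimp only
    rw [Vpi_zero]
    norm_num [pureP]
  · rintro _ ⟨π, rfl⟩
    dsimp only
    rw [Vpi_zero]
    linarith [π.nonneg 0 1]

lemma Vstar_abs (w : ℝ) (s : St) (hs : s ≠ 0) : Vstar M (rew w) 1 s = 0 := by
  simp [Vstar, Vpi_abs _ w s hs]

/-- **Stochastic-transition counterexample to identifiability of partial return.**
With `r = rew 11` and `r̂ = rew 9` (undiscounted): (i) `a_risk` is the unique optimal action
at `s₀` under `r`, while `a_safe` is the unique optimal action at `s₀` under `r̂`, so
`Π*_r ≠ Π*_r̂`; and (ii) the noiseless partial-return preference relation over the three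
length-1 segments is identical under `r` and `r̂`:
`(s₀, a_risk, s_win) ≻ (s₀, a_safe, s_safe) ≻ (s₀, a_risk, s_lose)`. -/
theorem stochastic_counterexample_to_partial_return :
    (Qstar M (rew 11) 1 0 1 = Vstar M (rew 11) 1 0 ∧
      Qstar M (rew 11) 1 0 0 < Vstar M (rew 11) 1 0) ∧
    (Qstar M (rew 9) 1 0 0 = Vstar M (rew 9) 1 0 ∧
      Qstar M (rew 9) 1 0 1 < Vstar M (rew 9) 1 0) ∧
    Pistar M (rew 11) 1 ≠ Pistar M (rew 9) 1 ∧
    (rew 11 0 1 2 > rew 11 0 0 1 ∧ rew 11 0 0 1 > rew 11 0 1 3) ∧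
    (rew 9 0 1 2 > rew 9 0 0 1 ∧ rew 9 0 0 1 > rew 9 0 1 3) := by
  refine ⟨⟨?_, ?_⟩, ⟨?_, ?_⟩, ?_, ⟨?_, ?_⟩, ?_, ?_⟩
  · rw [Qstar_risk, Vstar_11]; norm_num
  · rw [Qstar_safe, Vstar_11]; norm_num
  · rw [Qstar_safe, Vstar_9]
  · rw [Qstar_risk, Vstar_9]; norm_num
  · intro h
    have h1 : pureP 1 ∈ Pistar M (rew 11) 1 := by
      intro s
      by_cases hs : s = 0
      · subst hs
        rw [Vpi_zero, Vstar_11]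
        norm_num [pureP]
      · rw [Vpi_abs _ _ _ hs, Vstar_abs _ _ hs]
    rw [h] at h1
    have h2 := h1 0
    rw [Vpi_zero, Vstar_9] at h2
    norm_num [pureP] at h2
  all_goals simp +decide [rew]

end RiskMDP
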